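/- The 5-rank of the Hermitian unital design of order 4 — the 2-(65,5,1) design whose points are the 65 points of H = { [x : y : z] ∈ PG(2,16) : x⁵ + y⁵ + z⁵ = 0 } and whose blocks are the intersections H ∩ ℓ over lines ℓ of PG(2,16) meeting H in 5 points — is exactly 52; that is, the block–point incidence matrix of this design has rank 52 over the field GF(5). -/

import Mathlib

noncomputable section

/-- The field `GF(16)` of 16 elements. -/
abbrev K16 := GaloisField 2 4

/-- The 3-dimensional vector space over `GF(16)`. -/
abbrev V16 := Fin 3 → K16

/-- The point set of the Desarguesian projective plane `PG(2,16)`: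
1-dimensional subspaces of the 3-dimensional vector space over `GF(16)`. -/
abbrev PG216 := Projectivization K16 V16

/-- The Hermitian set `H = { [x : y : z] ∈ PG(2,16) : x⁵ + y⁵ + z⁵ = 0 }`.
(The defining condition is invariant under scalar multiplication, so it may be
evaluated on the chosen representative of each point.) -/
def HermitianSet : Set PG216 :=
  {p | p.rep 0 ^ 5 + p.rep 1 ^ 5 + p.rep 2 ^ 5 = 0}
/-- The blocks of the Hermitian unital design: intersections of the Hermitian set with
lines of `PG(2,16)` meeting it in 5 points, viewed as subsets of the Hermitian set. -/
def hermitianBlocks : Set (Set ↥HermitianSet) :=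
  {b | ∃ W : Submodule K16 V16, Module.finrank K16 W = 2 ∧
        b = {x : ↥HermitianSet | x.1.submodule ≤ W} ∧ b.ncard = 5}

instance : Finite PG216 := Quotient.finite _

noncomputable instance : Fintype ↥HermitianSet := Fintype.ofFinite _

/-- The block–point incidence matrix of the Hermitian unital design, with entries in
`GF(5)`: rows are indexed by blocks, columns by points, and the `(B, x)` entry is `1`
if `x ∈ B` and `0` otherwise. -/
def hermitianIncidenceMatrix : Matrix ↥hermitianBlocks ↥HermitianSet (ZMod 5) :=
  fun B x => Set.indicator B.1 (fun _ => 1) x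

def expT : ℕ := 711541965164086305
def logT : ℕ := 14688061253356765440
/-- Normalised coordinate codes of the 65 points. -/
def ptList : List (ℕ × ℕ × ℕ) :=
  [(1, 0, 1), (1, 0, 8), (1, 0, 10), (1, 0, 12), (1, 0, 15), (1, 1, 0), (1, 2, 4), (1, 2, 5),
   (1, 2, 6), (1, 2, 9), (1, 2, 14), (1, 3, 4), (1, 3, 5), (1, 3, 6), (1, 3, 9), (1, 3, 14), (1,
   4, 2), (1, 4, 3), (1, 4, 7), (1, 4, 11), (1, 4, 13), (1, 5, 2), (1, 5, 3), (1, 5, 7), (1, 5,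
   11), (1, 5, 13), (1, 6, 2), (1, 6, 3), (1, 6, 7), (1, 6, 11), (1, 6, 13), (1, 7, 4), (1, 7,
   5), (1, 7, 6), (1, 7, 9), (1, 7, 14), (1, 8, 0), (1, 9, 2), (1, 9, 3), (1, 9, 7), (1, 9, 11),
   (1, 9, 13), (1, 10, 0), (1, 11, 4), (1, 11, 5), (1, 11, 6), (1, 11, 9), (1, 11, 14), (1, 12,
   0), (1, 13, 4), (1, 13, 5), (1, 13, 6), (1, 13, 9), (1, 13, 14), (1, 14, 2), (1, 14, 3), (1,
   14, 7), (1, 14, 11), (1, 14, 13), (1, 15, 0), (0, 1, 1), (0, 1, 8), (0, 1, 10), (0, 1, 12),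
   (0, 1, 15)]
/-- The 208 blocks as lists of point indices. -/
def blockList : List (List ℕ) :=
  [[60, 61, 62, 63, 64], [9, 14, 34, 46, 52], [10, 15, 35, 47, 53], [20, 25, 30, 41, 58], [19,
   24, 29, 40, 57], [18, 23, 28, 39, 56], [8, 13, 33, 45, 51], [16, 21, 26, 37, 54], [7, 12, 32,
   44, 50], [6, 11, 31, 43, 49], [17, 22, 27, 38, 55], [0, 5, 28, 33, 60], [5, 19, 21, 44, 51],
   [5, 17, 25, 45, 49], [5, 6, 14, 37, 56], [5, 10, 12, 39, 55], [5, 9, 15, 41, 57], [5, 20, 24,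
   46, 53], [4, 5, 29, 31, 64], [5, 8, 11, 38, 58], [3, 5, 26, 35, 63], [5, 16, 23, 43, 52], [2,
   5, 27, 34, 62], [5, 18, 22, 47, 50], [5, 7, 13, 40, 54], [1, 5, 30, 32, 61], [37, 38, 39, 40,
   41], [0, 7, 24, 30, 43], [20, 35, 49, 56, 60], [18, 32, 52, 57, 64], [17, 31, 50, 54, 63],
   [4, 8, 22, 28, 46], [3, 9, 25, 27, 44], [19, 33, 53, 55, 62], [2, 6, 21, 29, 47], [16, 34,
   51, 58, 61], [1, 10, 23, 26, 45], [54, 55, 56, 57, 58], [0, 11, 20, 29, 50], [23, 31, 41, 47,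
   61], [24, 34, 39, 44, 60], [21, 32, 38, 43, 62], [4, 14, 18, 27, 51], [3, 12, 17, 30, 52],
   [22, 35, 40, 45, 64], [2, 15, 19, 26, 49], [25, 33, 37, 46, 63], [1, 13, 16, 28, 53], [49,
   50, 51, 52, 53], [0, 9, 16, 35, 38], [15, 29, 45, 55, 60], [13, 26, 46, 58, 62], [12, 27, 43,
   54, 64], [4, 10, 20, 32, 37], [14, 28, 44, 57, 61], [3, 8, 19, 31, 39], [2, 7, 18, 33, 41],
   [11, 30, 47, 56, 63], [1, 6, 17, 34, 40], [43, 44, 45, 46, 47], [0, 15, 22, 34, 54], [8, 27,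
   40, 53, 63], [9, 30, 37, 51, 60], [6, 26, 38, 50, 61], [4, 12, 21, 35, 58], [7, 29, 39, 52,
   62], [3, 11, 23, 33, 57], [2, 13, 25, 32, 56], [10, 28, 41, 49, 64], [1, 14, 24, 31, 55],
   [31, 32, 33, 34, 35], [0, 37, 47, 52, 55], [10, 13, 19, 22, 61], [8, 14, 16, 25, 64], [7, 11,
   17, 21, 60], [4, 41, 44, 53, 54], [9, 12, 18, 24, 63], [3, 40, 43, 51, 56], [2, 39, 45, 50,
   58], [6, 15, 20, 23, 62], [1, 38, 46, 49, 57], [26, 27, 28, 29, 30], [0, 40, 44, 49, 58],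
   [10, 11, 18, 25, 62], [7, 14, 19, 23, 63], [6, 12, 16, 22, 60], [4, 38, 45, 52, 56], [3, 41,
   46, 50, 55], [8, 15, 17, 24, 61], [2, 37, 43, 53, 57], [9, 13, 20, 21, 64], [1, 39, 47, 51,
   54], [0, 18, 45, 59, 61], [12, 26, 33, 40, 59], [13, 30, 31, 38, 59], [9, 23, 49, 54, 59],
   [7, 22, 53, 56, 59], [10, 24, 52, 58, 59], [14, 29, 35, 41, 59], [4, 19, 43, 59, 60], [6, 25,
   51, 55, 59], [3, 16, 47, 59, 62], [11, 28, 34, 37, 59], [2, 17, 46, 59, 64], [15, 27, 32, 39,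
   59], [8, 21, 50, 57, 59], [1, 20, 44, 59, 63], [6, 7, 8, 9, 10], [0, 14, 17, 26, 53], [24,
   33, 38, 47, 64], [21, 34, 41, 45, 63], [22, 31, 37, 44, 62], [4, 15, 16, 30, 50], [23, 32,
   40, 46, 60], [3, 13, 18, 29, 49], [2, 12, 20, 28, 51], [25, 35, 39, 43, 61], [1, 11, 19, 27,
   52], [0, 8, 48, 56, 62], [13, 24, 37, 48, 50], [11, 22, 41, 48, 51], [18, 26, 34, 43, 48],
   [17, 28, 32, 47, 48], [19, 30, 35, 46, 48], [15, 25, 40, 48, 52], [4, 6, 48, 57, 63], [20,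
   27, 31, 45, 48], [3, 10, 48, 54, 60], [14, 21, 39, 48, 49], [2, 9, 48, 55, 61], [12, 23, 38,
   48, 53], [16, 29, 33, 44, 48], [1, 7, 48, 58, 64], [21, 22, 23, 24, 25], [0, 6, 19, 32, 41],
   [15, 28, 43, 58, 63], [12, 29, 46, 56, 61], [11, 26, 44, 55, 64], [4, 9, 17, 33, 39], [3, 7,
   20, 34, 38], [13, 27, 47, 57, 60], [2, 10, 16, 31, 40], [14, 30, 45, 54, 62], [1, 8, 18, 35,
   37], [0, 13, 39, 42, 63], [7, 16, 42, 45, 57], [8, 20, 42, 43, 55], [21, 28, 31, 42, 52],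
   [23, 27, 35, 42, 50], [25, 29, 34, 42, 53], [9, 19, 42, 47, 58], [4, 11, 40, 42, 61], [22,
   30, 33, 42, 49], [3, 15, 37, 42, 64], [6, 18, 42, 46, 54], [2, 14, 38, 42, 60], [10, 17, 42,
   44, 56], [24, 26, 32, 42, 51], [1, 12, 41, 42, 62], [16, 17, 18, 19, 20], [0, 12, 25, 31,
   57], [6, 30, 39, 53, 64], [9, 28, 40, 50, 62], [7, 27, 37, 49, 61], [4, 13, 23, 34, 55], [3,
   14, 22, 32, 58], [10, 29, 38, 51, 63], [2, 11, 24, 35, 54], [8, 26, 41, 52, 60], [1, 15, 21,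
   33, 56], [11, 12, 13, 14, 15], [0, 10, 21, 27, 46], [17, 35, 51, 57, 62], [20, 33, 52, 54,
   61], [16, 32, 49, 55, 63], [4, 7, 25, 26, 47], [19, 34, 50, 56, 64], [3, 6, 24, 28, 45], [2,
   8, 23, 30, 44], [18, 31, 53, 58, 60], [1, 9, 22, 29, 43], [0, 23, 36, 51, 64], [8, 29, 32,
   36, 54], [6, 27, 33, 36, 58], [11, 16, 36, 39, 46], [15, 18, 36, 38, 44], [14, 20, 36, 40,
   47], [10, 30, 34, 36, 57], [4, 24, 36, 49, 62], [13, 17, 36, 41, 43], [3, 21, 36, 53, 61],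
   [9, 26, 31, 36, 56], [2, 22, 36, 52, 63], [7, 28, 35, 36, 55], [12, 19, 36, 37, 45], [1, 25,
   36, 50, 60], [0, 1, 2, 3, 4], [16, 24, 27, 41, 56], [20, 22, 26, 39, 57], [9, 11, 32, 45,
   53], [7, 15, 31, 46, 51], [10, 14, 33, 43, 50], [19, 25, 28, 38, 54], [6, 13, 35, 44, 52],
   [18, 21, 30, 40, 55], [17, 23, 29, 37, 58], [8, 12, 34, 47, 49], [5, 36, 42, 48, 59]]
/-- The 52 lines whose rows are independent. -/
def rowLines : List (ℕ × ℕ × ℕ) :=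
  [(1, 0, 0), (1, 0, 2), (1, 0, 3), (1, 0, 4), (1, 0, 5), (1, 0, 6), (1, 0, 7), (1, 0, 9), (1,
   0, 11), (1, 0, 13), (1, 0, 14), (1, 1, 1), (1, 1, 2), (1, 1, 3), (1, 1, 4), (1, 1, 5), (1, 1,
   6), (1, 1, 7), (1, 1, 8), (1, 1, 9), (1, 1, 10), (1, 1, 11), (1, 1, 12), (1, 1, 13), (1, 1,
   14), (1, 1, 15), (1, 2, 0), (1, 2, 1), (1, 2, 2), (1, 2, 3), (1, 2, 7), (1, 2, 8), (1, 2,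
   10), (1, 2, 11), (1, 2, 12), (1, 2, 13), (1, 2, 15), (1, 3, 0), (1, 3, 1), (1, 3, 2), (1, 3,
   3), (1, 3, 7), (1, 3, 8), (1, 3, 10), (1, 3, 11), (1, 3, 12), (1, 3, 13), (1, 4, 1), (1, 8,
   1), (1, 10, 1), (1, 12, 1), (1, 15, 1)]
/-- Their blocks. -/
def rowBlocks : List (List ℕ) :=
  [[60, 61, 62, 63, 64], [9, 14, 34, 46, 52], [10, 15, 35, 47, 53], [20, 25, 30, 41, 58], [19,
   24, 29, 40, 57], [18, 23, 28, 39, 56], [8, 13, 33, 45, 51], [16, 21, 26, 37, 54], [7, 12, 32,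
   44, 50], [6, 11, 31, 43, 49], [17, 22, 27, 38, 55], [0, 5, 28, 33, 60], [5, 19, 21, 44, 51],
   [5, 17, 25, 45, 49], [5, 6, 14, 37, 56], [5, 10, 12, 39, 55], [5, 9, 15, 41, 57], [5, 20, 24,
   46, 53], [4, 5, 29, 31, 64], [5, 8, 11, 38, 58], [3, 5, 26, 35, 63], [5, 16, 23, 43, 52], [2,
   5, 27, 34, 62], [5, 18, 22, 47, 50], [5, 7, 13, 40, 54], [1, 5, 30, 32, 61], [37, 38, 39, 40,
   41], [0, 7, 24, 30, 43], [20, 35, 49, 56, 60], [18, 32, 52, 57, 64], [17, 31, 50, 54, 63],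
   [4, 8, 22, 28, 46], [3, 9, 25, 27, 44], [19, 33, 53, 55, 62], [2, 6, 21, 29, 47], [16, 34,
   51, 58, 61], [1, 10, 23, 26, 45], [54, 55, 56, 57, 58], [0, 11, 20, 29, 50], [23, 31, 41, 47,
   61], [24, 34, 39, 44, 60], [21, 32, 38, 43, 62], [4, 14, 18, 27, 51], [3, 12, 17, 30, 52],
   [22, 35, 40, 45, 64], [2, 15, 19, 26, 49], [25, 33, 37, 46, 63], [0, 9, 16, 35, 38], [0, 18,
   45, 59, 61], [0, 8, 48, 56, 62], [0, 13, 39, 42, 63], [0, 23, 36, 51, 64]]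
/-- The right inverse, rows packed in base 8. -/
def invT : List ℕ :=
  [78452951093056220499378998060615900453738240, 78762779021851485118602549598977190651826337,
   79446590063168856617222245365514711142875292, 79633828970749276191126463608939149918019730,
   79446782365037281146363791765246048346313474, 95314638363167611869918946926090831542923464,
   78120351144394332655714489143762152967734337, 78227784670564703368626248603709575300466972,
   79539220176006162403853036197450791824954052, 78408060293975466408829754125595274777863899,
   78208033724947179832012642130207518426411299, 93572238981136545947990891613987315135355096,
   93401470107769437578393356767755827549942564, 93167453823638816288314295531731723862689298,
   91990683117636053080323296218623366882506329, 93517890643988077876823921320285516710889627,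
   9544411824921323829586322163566232080367828, 9250612626513916116936950417134001953998467,
   9460126309205038084036457041424329757770402, 9562662972987390043548976921843851655708828,
   9414283955588459899690943925073280220832476, 73224385893005582215087388288136441292654690,
   73976318206820724928986582905008185253147913, 72967610028933349710560560886150206394353434,
   74014478766822728320342398150599482536136737, 73524423561487444735232354990583114729857729,
   72891986095432317835445718200790799954846297, 73719745641003358413859312714142616766128344,
   72962100986382100300032341333756712735085587, 73180743347670358235452212970082138097194017,
   72576965630924924096279351956026645480604321, 6675088260431483292365433766168320191104194,
   6468969927123644393652959804966518651721931, 6366014556523254628399088525258032192782545,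
   6381235893943717296990431765802235550273689, 7025152800325594659603186215217585879398690,
   11519435496157941075718947837854389096395442323, 98983632136364429523393385248445868190056459,
   97915586655862551166842151817165439074598985, 97702936830901401802761729254450696102648075,
   98107766832761909274433422132582328715265764, 99101148044133024491353656455651072915904156,
   1522524207408572579949983104416424727736041616, 75266068129186261916579893606691833527714852,
   76763971234998429400889839405524296659706644, 75761859441775659680334199147951207524107019,
   76094975088993349600219435490874206993598736, 76114575583368447633912966726670341991695458,
   273288259428479701005314844608264197783761601, 1231912792784434755240204561505413621350619, 0, 0,
   0, 0, 2596148429267413814265248164610048, 0, 0, 0, 0, 0, 1, 0, 0, 0, 0]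
/-- The kernel vectors, rows packed in base 8. -/
def kerT : List ℕ :=
  [577012417, 34400216786, 274920507650, 4329711636, 78551291401, 295437377536, 208344754266,
   235324610769, 294515716834, 20441999009, 26078914132, 312746247938, 90352502026,
   300802000649, 217181620243, 207786092234, 20542228698, 216896514128, 304009811537,
   295556417761, 296487854241, 98149968010, 157341302940, 27957708560, 17618842841,
   140700427019, 302296215625, 141906260256, 79899936800, 175458628168, 86474367236,
   166433211164, 19869287644, 95968673932, 28322890379, 173946745616, 295439012564,
   20686345472, 225504920265, 29144125460, 296647411411, 217994905602, 97190413012,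
   97075611267, 96137778210, 88626479707, 175055909915, 28493067396, 97197795082, 2340,
   1, 8, 64, 512, 9584640, 4096, 32768, 262144, 2097152, 16777216, 314069483520,
   134217728, 1073741824, 8589934592, 68719476736]
/-- The free points. -/
def freeList : List ℕ :=
  [50, 51, 52, 53, 55, 56, 57, 58, 59, 61, 62, 63, 64]

/-- Multiplication on codes. -/
def cmul (a b : ℕ) : ℕ :=
  bif a == 0 then 0 else bif b == 0 then 0 else
    (expT >>> (4 * ((((logT >>> (4 * a)) &&& 15) + ((logT >>> (4 * b)) &&& 15)) % 15))) &&& 15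

/-- Fifth power on codes. -/
def cpow5 (a : ℕ) : ℕ := cmul a (cmul (cmul a a) (cmul a a))

/-- All normalised triples. -/
def normals : List (ℕ × ℕ × ℕ) :=
  ((List.range 256).map fun k => (1, k / 16, k % 16)) ++
    ((List.range 16).map fun k => (0, 1, k)) ++ [(0, 0, 1)]

def herm (p : ℕ × ℕ × ℕ) : Bool := (cpow5 p.1 ^^^ (cpow5 p.2.1 ^^^ cpow5 p.2.2)) == 0

def incP (n p : ℕ × ℕ × ℕ) : Bool :=
  (cmul n.1 p.1 ^^^ (cmul n.2.1 p.2.1 ^^^ cmul n.2.2 p.2.2)) == 0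

def ptc (i : ℕ) : ℕ × ℕ × ℕ := ptList.getD i (0, 0, 1)

def lineIdx (n : ℕ × ℕ × ℕ) : List ℕ := (List.range 65).filter fun i => incP n (ptc i)

def invD (i j : ℕ) : ℕ := (invT.getD i 0 >>> (3 * j)) &&& 7
def kerD (i j : ℕ) : ℕ := (kerT.getD i 0 >>> (3 * j)) &&& 7

theorem ptList_eq : normals.filter herm = ptList := by decide +kernel

theorem ptList_nodup : ptList.Nodup := by decide +kernel

theorem lines_ok : ((normals.map lineIdx).filter fun L => L.length == 5) = blockList := by
  decide +kernel

theorem rows_mem : (rowLines.all fun n => normals.contains n) = true := by decide +kernel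

theorem rows_ok : rowLines.map lineIdx = rowBlocks := by decide +kernel

theorem ker_ok : (blockList.all fun L => (List.range 13).all fun k =>
    (L.map fun i => kerD i k).sum % 5 == 0) = true := by decide +kernel

theorem rowBlocks_len : (rowBlocks.all fun L => L.length == 5) = true := by decide +kernel

theorem inv_ok : ((List.range 52).all fun r => (List.range 52).all fun j =>
    ((rowBlocks.getD r []).map fun i => invD i j).sum % 5 == bif r == j then 1 else 0) = true := by
  decide +kernel

theorem free_ok : ((List.range 13).all fun r => (List.range 13).all fun j =>
    kerD (freeList.getD r 0) j == bif r == j then 1 else 0) = true := by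
  decide +kernel
theorem free_lt : (freeList.all fun r => decide (r < 65)) = true := by decide +kernel

/-! ### The field -/

theorem K16_card : Nat.card K16 = 16 := by
  have := GaloisField.card 2 4 (by norm_num)
  simpa using this

instance : Fintype K16 := Fintype.ofFinite _

theorem exists_alpha : ∃ a : K16, a ^ 4 = a + 1 := by
  classical
  by_contra hcon
  push Not at hcon
  have h2 : (2 : K16) = 0 := CharTwo.two_eq_zero
  let h : Polynomial K16 := Polynomial.X ^ 11 + Polynomial.X ^ 8 + Polynomial.X ^ 7
    + Polynomial.X ^ 5 + Polynomial.X ^ 3 + Polynomial.X ^ 2 + Polynomial.X + 1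
  have hdeg : h.natDegree = 11 := by
    simp only [h]; compute_degree!
  have h0 : h ≠ 0 := by
    intro h0; rw [h0] at hdeg; simp at hdeg
  have hcard : Fintype.card K16 = 16 := by rw [← Nat.card_eq_fintype_card, K16_card]
  have hroot : ∀ x : K16, x ≠ 0 → x ∈ h.roots.toFinset := by
    intro x hx
    rw [Multiset.mem_toFinset, Polynomial.mem_roots h0, Polynomial.IsRoot.def]
    have h15 : x ^ 15 = 1 := by
      have := FiniteField.pow_card_sub_one_eq_one x hx
      rwa [hcard] at this
    have hne : x ^ 4 + x + 1 ≠ 0 := by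
      intro hx4
      apply hcon x
      linear_combination hx4 - (x + 1) * h2
    have : (x ^ 4 + x + 1) * (h.eval x) = 0 := by
      simp only [h, Polynomial.eval_add, Polynomial.eval_pow, Polynomial.eval_X,
        Polynomial.eval_one]
      linear_combination h15 + (x + x ^ 2 + x ^ 3 + x ^ 4 + x ^ 5 + x ^ 6 + x ^ 7 + x ^ 8 + x ^ 9
        + x ^ 11 + x ^ 12 + 1) * h2
    exact (mul_eq_zero.mp this).resolve_left hne
  have hsub : (Finset.univ.erase (0 : K16)) ⊆ h.roots.toFinset := by
    intro x hx
    exact hroot x (Finset.ne_of_mem_erase hx)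
  have h1 := Finset.card_le_card hsub
  rw [Finset.card_erase_of_mem (Finset.mem_univ _), Finset.card_univ, hcard] at h1
  have h3 := Multiset.toFinset_card_le h.roots
  have h4 := Polynomial.card_roots' h
  omega

def alpha : K16 := exists_alpha.choose
theorem alpha_pow : alpha ^ 4 = alpha + 1 := exists_alpha.choose_spec

theorem alpha_ne : alpha ≠ 0 := by
  intro h
  have := alpha_pow
  rw [h] at this
  norm_num at this

def bitv (a k : ℕ) : K16 := bif a.testBit k then 1 else 0

/-- Decoding: bits are coefficients of powers of `alpha`. -/
def phi (a : ℕ) : K16 :=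
  bitv a 0 + bitv a 1 * alpha + bitv a 2 * alpha ^ 2 + bitv a 3 * alpha ^ 3

theorem bitv_xor (a b k : ℕ) : bitv (a ^^^ b) k = bitv a k + bitv b k := by
  have h2 : (1 : K16) + 1 = 0 := CharTwo.add_self_eq_zero 1
  unfold bitv
  rw [Nat.testBit_xor]
  cases a.testBit k <;> cases b.testBit k <;> simp [h2]

theorem phi_xor (a b : ℕ) : phi (a ^^^ b) = phi a + phi b := by
  simp only [phi, bitv_xor]; ring

theorem phi_zero : phi 0 = 0 := by simp [phi, bitv]
theorem phi_one : phi 1 = 1 := by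
  simp [phi, bitv, Nat.testBit, Nat.shiftRight_succ]

def cexp (i : ℕ) : ℕ := (expT >>> (4 * i)) &&& 15
def clog (a : ℕ) : ℕ := (logT >>> (4 * a)) &&& 15

theorem phi_double (a : ℕ) (ha : a < 8) : phi (2 * a) = alpha * phi a := by
  interval_cases a <;> simp [phi, bitv, Nat.testBit, Nat.shiftRight_succ] <;> ring

theorem phi_double' (a : ℕ) (ha : a < 8) : phi ((2 * (8 + a)) ^^^ 16 ^^^ 3) = alpha * phi (8 + a) := by
  have h4 := alpha_pow
  interval_cases a <;> simp [phi, bitv, Nat.testBit, Nat.shiftRight_succ] <;>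
    first
    | linear_combination -h4
    | linear_combination -h4 - alpha * (CharTwo.two_eq_zero : (2 : K16) = 0)

theorem phi_cexp_succ (i : ℕ) (hi : i < 15) : phi (cexp ((i + 1) % 15)) = alpha * phi (cexp i) := by
  have key : ∀ i < 15, (cexp i < 8 ∧ cexp ((i + 1) % 15) = 2 * cexp i) ∨
      (cexp i - 8 < 8 ∧ 8 + (cexp i - 8) = cexp i ∧
        cexp ((i + 1) % 15) = (2 * (8 + (cexp i - 8))) ^^^ 16 ^^^ 3) := by
    decide +kernel
  rcases key i hi with ⟨h1, h2⟩ | ⟨h1, h2, h3⟩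
  · rw [h2, phi_double _ h1]
  · rw [h3, phi_double' _ h1, h2]

theorem phi_cexp (i : ℕ) : phi (cexp (i % 15)) = alpha ^ i := by
  induction i with
  | zero =>
    have : cexp (0 % 15) = 1 := by decide +kernel
    rw [this, phi_one, pow_zero]
  | succ i ih =>
    have h := phi_cexp_succ (i % 15) (Nat.mod_lt _ (by norm_num))
    rw [ih] at h
    rw [pow_succ', ← h]
    congr 2
    omega

theorem cexp_clog : ∀ a < 16, a ≠ 0 → clog a < 15 ∧ cexp (clog a) = a := by decide +kernel

theorem phi_eq_pow (a : ℕ) (ha : a < 16) (h0 : a ≠ 0) : phi a = alpha ^ clog a := by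
  obtain ⟨h1, h2⟩ := cexp_clog a ha h0
  rw [← phi_cexp, Nat.mod_eq_of_lt h1, h2]

theorem phi_eq_zero (a : ℕ) (ha : a < 16) : phi a = 0 ↔ a = 0 := by
  constructor
  · intro h
    by_contra h0
    rw [phi_eq_pow a ha h0] at h
    exact pow_ne_zero _ alpha_ne h
  · rintro rfl; exact phi_zero

theorem phi_inj (a b : ℕ) (ha : a < 16) (hb : b < 16) (h : phi a = phi b) : a = b := by
  have h1 : phi (a ^^^ b) = 0 := by rw [phi_xor, h]; exact CharTwo.add_self_eq_zero _
  rw [phi_eq_zero _ (Nat.xor_lt_two_pow (n := 4) ha hb)] at h1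
  exact Nat.xor_eq_zero_iff.mp h1

theorem phi_surj (x : K16) : ∃ a < 16, phi a = x := by
  have hinj : Function.Injective (fun a : Fin 16 => phi a) := by
    intro a b h
    exact Fin.ext (phi_inj a b a.2 b.2 h)
  have hb := (Fintype.bijective_iff_injective_and_card _).mpr
    ⟨hinj, by rw [Fintype.card_fin, ← Nat.card_eq_fintype_card, K16_card]⟩
  obtain ⟨a, ha⟩ := hb.2 x
  exact ⟨a, a.2, ha⟩

theorem cmul_lt (a b : ℕ) : cmul a b < 16 := by
  unfold cmul
  cases h : (a == 0) <;> cases h' : (b == 0) <;> simp only [cond_true, cond_false] <;> try norm_num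
  exact lt_of_le_of_lt Nat.and_le_right (by norm_num)

theorem phi_cmul (a b : ℕ) (ha : a < 16) (hb : b < 16) : phi (cmul a b) = phi a * phi b := by
  by_cases h : a = 0
  · subst h; simp [cmul, phi_zero]
  by_cases h' : b = 0
  · subst h'; simp [cmul, phi_zero]
  have e : cmul a b = cexp ((clog a + clog b) % 15) := by
    rw [cmul, beq_false_of_ne h, beq_false_of_ne h']; rfl
  rw [e, phi_cexp, pow_add, ← phi_eq_pow a ha h, ← phi_eq_pow b hb h']

theorem phi_cpow5 (a : ℕ) (ha : a < 16) : phi (cpow5 a) = phi a ^ 5 := by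
  unfold cpow5
  rw [phi_cmul _ _ ha (cmul_lt _ _), phi_cmul _ _ (cmul_lt _ _) (cmul_lt _ _), phi_cmul _ _ ha ha]
  ring

/-- Vector of a code triple. -/
def vec (p : ℕ × ℕ × ℕ) : V16 := ![phi p.1, phi p.2.1, phi p.2.2]

def SmallC (p : ℕ × ℕ × ℕ) : Prop := p.1 < 16 ∧ p.2.1 < 16 ∧ p.2.2 < 16

theorem herm_iff (p) (hp : SmallC p) :
    herm p = true ↔ vec p 0 ^ 5 + vec p 1 ^ 5 + vec p 2 ^ 5 = 0 := by
  obtain ⟨h0, h1, h2⟩ := hp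
  have hlt : (cpow5 p.1 ^^^ (cpow5 p.2.1 ^^^ cpow5 p.2.2)) < 16 :=
    Nat.xor_lt_two_pow (n := 4) (cmul_lt _ _) (Nat.xor_lt_two_pow (n := 4) (cmul_lt _ _) (cmul_lt _ _))
  rw [herm, beq_iff_eq, ← phi_eq_zero _ hlt, phi_xor, phi_xor, phi_cpow5 _ h0, phi_cpow5 _ h1,
    phi_cpow5 _ h2, ← add_assoc]
  rfl

theorem incP_iff (n p) (hn : SmallC n) (hp : SmallC p) :
    incP n p = true ↔ vec n 0 * vec p 0 + vec n 1 * vec p 1 + vec n 2 * vec p 2 = 0 := by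
  obtain ⟨h0, h1, h2⟩ := hp
  obtain ⟨k0, k1, k2⟩ := hn
  have hlt : (cmul n.1 p.1 ^^^ (cmul n.2.1 p.2.1 ^^^ cmul n.2.2 p.2.2)) < 16 :=
    Nat.xor_lt_two_pow (n := 4) (cmul_lt _ _) (Nat.xor_lt_two_pow (n := 4) (cmul_lt _ _) (cmul_lt _ _))
  rw [incP, beq_iff_eq, ← phi_eq_zero _ hlt, phi_xor, phi_xor, phi_cmul _ _ k0 h0,
    phi_cmul _ _ k1 h1, phi_cmul _ _ k2 h2, ← add_assoc]
  rfl

/-! ### Normalised vectors -/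

def NormalV (v : V16) : Prop := v 0 = 1 ∨ (v 0 = 0 ∧ v 1 = 1) ∨ (v 0 = 0 ∧ v 1 = 0 ∧ v 2 = 1)

theorem NormalV.ne_zero {v : V16} (h : NormalV v) : v ≠ 0 := by
  rintro rfl
  simp [NormalV] at h

theorem NormalV.smul_eq {v w : V16} (hv : NormalV v) (hw : NormalV w) (a : K16) (h : a • w = v) :
    v = w := by
  have e0 : a * w 0 = v 0 := congrFun h 0
  have e1 : a * w 1 = v 1 := congrFun h 1
  have e2 : a * w 2 = v 2 := congrFun h 2
  have ha : a = 1 := by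
    rcases hv with h1 | ⟨h1, h2⟩ | ⟨h1, h2, h3⟩ <;> rcases hw with k1 | ⟨k1, k2⟩ | ⟨k1, k2, k3⟩ <;>
      simp_all
  rw [← h, ha, one_smul]

theorem exists_normal (v : V16) (hv : v ≠ 0) : ∃ c : K16, c ≠ 0 ∧ NormalV (c • v) := by
  by_cases h0 : v 0 = 0
  · by_cases h1 : v 1 = 0
    · by_cases h2 : v 2 = 0
      · exfalso; apply hv; funext i; fin_cases i <;> simp [h0, h1, h2]
      · exact ⟨(v 2)⁻¹, inv_ne_zero h2, Or.inr (Or.inr (by simp [h0, h1, h2]))⟩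
    · exact ⟨(v 1)⁻¹, inv_ne_zero h1, Or.inr (Or.inl (by simp [h0, h1]))⟩
  · exact ⟨(v 0)⁻¹, inv_ne_zero h0, Or.inl (by simp [h0])⟩

theorem mem_normals_iff (p : ℕ × ℕ × ℕ) : p ∈ normals ↔ SmallC p ∧
    (p.1 = 1 ∨ (p.1 = 0 ∧ p.2.1 = 1) ∨ (p.1 = 0 ∧ p.2.1 = 0 ∧ p.2.2 = 1)) := by
  obtain ⟨x, y, z⟩ := p
  simp only [normals, SmallC, List.mem_append, List.mem_map, List.mem_range, List.mem_singleton,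
    Prod.mk.injEq]
  constructor
  · rintro ((⟨k, hk, h1, h2, h3⟩ | ⟨k, hk, h1, h2, h3⟩) | ⟨h1, h2, h3⟩) <;> omega
  · rintro ⟨⟨a, b, c⟩, h | h | h⟩
    · exact Or.inl (Or.inl ⟨16 * y + z, by omega, by omega, by omega, by omega⟩)
    · exact Or.inl (Or.inr ⟨z, by omega, by omega, by omega, rfl⟩)
    · exact Or.inr h

theorem normal_of_mem {p} (h : p ∈ normals) : NormalV (vec p) := by
  obtain ⟨-, h⟩ := (mem_normals_iff p).mp h
  rcases h with h | ⟨h, h'⟩ | ⟨h, h', h''⟩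
  · exact Or.inl (by simp [vec, h, phi_one])
  · exact Or.inr (Or.inl (by simp [vec, h, h', phi_one, phi_zero]))
  · exact Or.inr (Or.inr (by simp [vec, h, h', h'', phi_one, phi_zero]))

theorem small_of_mem {p} (h : p ∈ normals) : SmallC p := ((mem_normals_iff p).mp h).1

theorem exists_code (v : V16) (hv : NormalV v) : ∃ p ∈ normals, vec p = v := by
  obtain ⟨a, ha, ha'⟩ := phi_surj (v 0)
  obtain ⟨b, hb, hb'⟩ := phi_surj (v 1)
  obtain ⟨c, hc, hc'⟩ := phi_surj (v 2)
  refine ⟨(a, b, c), (mem_normals_iff _).mpr ⟨⟨ha, hb, hc⟩, ?_⟩, ?_⟩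
  · have z : ∀ {a}, a < 16 → phi a = 0 → a = 0 := fun h h' => (phi_eq_zero _ h).mp h'
    have o : ∀ {a}, a < 16 → phi a = 1 → a = 1 := fun h h' =>
      phi_inj _ _ h (by norm_num) (h'.trans phi_one.symm)
    rcases hv with h | ⟨h, h'⟩ | ⟨h, h', h''⟩
    · exact Or.inl (o ha (ha'.trans h))
    · exact Or.inr (Or.inl ⟨z ha (ha'.trans h), o hb (hb'.trans h')⟩)
    · exact Or.inr (Or.inr ⟨z ha (ha'.trans h), z hb (hb'.trans h'), o hc (hc'.trans h'')⟩)
  · funext i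
    fin_cases i
    · exact ha'
    · exact hb'
    · exact hc'

theorem vec_inj {p q} (hp : SmallC p) (hq : SmallC q) (h : vec p = vec q) : p = q := by
  obtain ⟨x, y, z⟩ := p
  obtain ⟨x', y', z'⟩ := q
  have e0 : phi x = phi x' := congrFun h 0
  have e1 : phi y = phi y' := congrFun h 1
  have e2 : phi z = phi z' := congrFun h 2
  exact Prod.ext (phi_inj _ _ hp.1 hq.1 e0)
    (Prod.ext (phi_inj _ _ hp.2.1 hq.2.1 e1) (phi_inj _ _ hp.2.2 hq.2.2 e2))

/-! ### The points -/

theorem ptList_length : ptList.length = 65 := by decide +kernel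

theorem ptc_mem (i : Fin 65) : ptc i ∈ ptList := by
  unfold ptc
  rw [List.getD_eq_getElem _ _ (by rw [ptList_length]; exact i.2)]
  exact List.getElem_mem _

theorem ptc_normal (i : Fin 65) : ptc i ∈ normals := by
  have := ptc_mem i
  rw [← ptList_eq] at this
  exact (List.mem_filter.mp this).1

theorem ptc_herm (i : Fin 65) : herm (ptc i) = true := by
  have := ptc_mem i
  rw [← ptList_eq] at this
  exact (List.mem_filter.mp this).2

theorem mem_herm_mk (v : V16) (hv : v ≠ 0) :
    Projectivization.mk K16 v hv ∈ HermitianSet ↔ v 0 ^ 5 + v 1 ^ 5 + v 2 ^ 5 = 0 := by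
  obtain ⟨a, ha⟩ := Projectivization.exists_smul_eq_mk_rep K16 v hv
  unfold HermitianSet
  rw [Set.mem_ofPred_eq, ← ha]
  have : (a • v) 0 ^ 5 + (a • v) 1 ^ 5 + (a • v) 2 ^ 5
      = (a : K16) ^ 5 * (v 0 ^ 5 + v 1 ^ 5 + v 2 ^ 5) := by
    simp only [Units.smul_def, Pi.smul_apply, smul_eq_mul]; ring
  rw [this, mul_eq_zero, or_iff_right (pow_ne_zero _ a.ne_zero)]

def pt (i : Fin 65) : ↥HermitianSet :=
  ⟨Projectivization.mk K16 (vec (ptc i)) (normal_of_mem (ptc_normal i)).ne_zero,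
    (mem_herm_mk _ _).mpr ((herm_iff _ (small_of_mem (ptc_normal i))).mp (ptc_herm i))⟩

theorem pt_injective : Function.Injective pt := by
  intro i j h
  have h1 := congrArg Subtype.val h
  simp only [pt] at h1
  rw [Projectivization.mk_eq_mk_iff'] at h1
  obtain ⟨a, ha⟩ := h1
  have h2 := (normal_of_mem (ptc_normal i)).smul_eq (normal_of_mem (ptc_normal j)) a ha
  have h3 := vec_inj (small_of_mem (ptc_normal i)) (small_of_mem (ptc_normal j)) h2
  unfold ptc at h3
  rw [List.getD_eq_getElem _ _ (by rw [ptList_length]; exact i.2),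
    List.getD_eq_getElem _ _ (by rw [ptList_length]; exact j.2)] at h3
  exact Fin.ext ((ptList_nodup.getElem_inj_iff).mp h3)

theorem pt_surjective : Function.Surjective pt := by
  rintro ⟨x, hx⟩
  induction x using Projectivization.ind with
  | h v hv =>
  obtain ⟨c, hc, hn⟩ := exists_normal v hv
  obtain ⟨p, hp, hpv⟩ := exists_code _ hn
  have hh : herm p = true := by
    rw [herm_iff p (small_of_mem hp), hpv]
    have h5 := (mem_herm_mk v hv).mp hx
    simp only [Pi.smul_apply, smul_eq_mul]
    linear_combination c ^ 5 * h5
  have hm : p ∈ ptList := by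
    rw [← ptList_eq]; exact List.mem_filter.mpr ⟨hp, hh⟩
  obtain ⟨i, hi, hip⟩ := List.getElem_of_mem hm
  rw [ptList_length] at hi
  refine ⟨⟨i, hi⟩, Subtype.ext ?_⟩
  simp only [pt]
  rw [Projectivization.mk_eq_mk_iff']
  refine ⟨c, ?_⟩
  rw [← hpv, ← hip]
  unfold ptc
  rw [List.getD_eq_getElem]

def ptEquiv : Fin 65 ≃ ↥HermitianSet := Equiv.ofBijective pt ⟨pt_injective, pt_surjective⟩

/-! ### The lines -/

/-- The functional with given coefficients. -/
def func (n : V16) : V16 →ₗ[K16] K16 :=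
  n 0 • LinearMap.proj 0 + n 1 • LinearMap.proj 1 + n 2 • LinearMap.proj 2

theorem func_apply (n v : V16) : func n v = n 0 * v 0 + n 1 * v 1 + n 2 * v 2 := by
  simp [func]

theorem func_ne_zero (n : V16) (hn : n ≠ 0) : func n ≠ 0 := by
  intro h
  apply hn
  funext i
  have := congrArg (fun f => f (Pi.single i 1)) h
  simp only [func_apply] at this
  fin_cases i <;> simpa using this

theorem exists_func (f : V16 →ₗ[K16] K16) : f = func (fun i => f (Pi.single i 1)) := by
  apply LinearMap.pi_ext'
  intro i
  ext
  fin_cases i <;> simp [func_apply]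

theorem finrank_func (n : V16) (hn : n ≠ 0) :
    Module.finrank K16 (LinearMap.ker (func n)) = 2 := by
  have := Module.Dual.finrank_ker_add_one_of_ne_zero (func_ne_zero n hn)
  rw [Module.finrank_fin_fun] at this
  omega

theorem exists_line (W : Submodule K16 V16) (hW : Module.finrank K16 W = 2) :
    ∃ n ∈ normals, W = LinearMap.ker (func (vec n)) := by
  have hlt : W < ⊤ := by
    rw [lt_top_iff_ne_top]
    rintro rfl
    rw [finrank_top, Module.finrank_fin_fun] at hW
    omega
  obtain ⟨f, hf, hle⟩ := W.exists_le_ker_of_lt_top hlt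
  set m : V16 := fun i => f (Pi.single i 1) with hm
  have hfm : f = func m := exists_func f
  have hm0 : m ≠ 0 := by
    intro h
    apply hf
    rw [hfm, h]
    ext; simp [func_apply]
  obtain ⟨c, hc, hn⟩ := exists_normal m hm0
  obtain ⟨p, hp, hpv⟩ := exists_code _ hn
  refine ⟨p, hp, ?_⟩
  apply Submodule.eq_of_le_of_finrank_eq
  · intro v hv
    have h1 : func m v = 0 := by rw [← hfm]; exact hle hv
    rw [LinearMap.mem_ker, hpv, func_apply]
    rw [func_apply] at h1
    simp only [Pi.smul_apply, smul_eq_mul]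
    linear_combination c * h1
  · rw [hW, finrank_func _ (normal_of_mem hp).ne_zero]

def lineSet (n : ℕ × ℕ × ℕ) : Set ↥HermitianSet :=
  {x | x.1.submodule ≤ LinearMap.ker (func (vec n))}

theorem pt_mem_lineSet (n) (hn : n ∈ normals) (i : Fin 65) :
    pt i ∈ lineSet n ↔ incP n (ptc i) = true := by
  rw [incP_iff _ _ (small_of_mem hn) (small_of_mem (ptc_normal i)), ← func_apply]
  simp only [lineSet, Set.mem_ofPred_eq, pt, Projectivization.submodule_mk,
    Submodule.span_singleton_le_iff_mem, LinearMap.mem_ker]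

theorem lineIdx_sum {R : Type*} [AddCommMonoid R] (n) (g : ℕ → R) :
    ∑ i : Fin 65, (if incP n (ptc i) = true then g i else 0) = ((lineIdx n).map g).sum := by
  rw [Fin.sum_univ_eq_sum_range (fun i => if incP n (ptc i) = true then g i else 0) 65,
    ← Finset.sum_filter]
  have h : lineIdx n = (List.range 65).filter (fun i => decide (incP n (ptc i) = true)) := by
    simp [lineIdx]
  rw [h]
  rfl

theorem lineSet_ncard (n) (hn : n ∈ normals) : (lineSet n).ncard = (lineIdx n).length := by
  classical
  have h1 : lineSet n = pt '' ((Finset.univ.filter fun i : Fin 65 => incP n (ptc i) = true) :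
      Finset (Fin 65)) := by
    ext x
    obtain ⟨i, rfl⟩ := pt_surjective x
    rw [pt_mem_lineSet n hn, pt_injective.mem_set_image]
    simp
  rw [h1, Set.ncard_image_of_injective _ pt_injective, Set.ncard_coe_finset, Finset.card_filter,
    lineIdx_sum n (fun _ => 1)]
  simp

theorem row_sum (B : ↥hermitianBlocks) (n) (hn : n ∈ normals) (hB : B.1 = lineSet n)
    (g : ℕ → ZMod 5) :
    ∑ i : Fin 65, hermitianIncidenceMatrix B (ptEquiv i) * g i = ((lineIdx n).map g).sum := by
  classical
  rw [← lineIdx_sum]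
  apply Finset.sum_congr rfl
  intro i _
  have hp : ptEquiv i = pt i := rfl
  simp only [hermitianIncidenceMatrix, hB, hp, Set.indicator_apply, pt_mem_lineSet n hn]
  split <;> simp

theorem cast_sum (L : List ℕ) (g : ℕ → ℕ) :
    (L.map fun i => (g i : ZMod 5)).sum = (((L.map g).sum % 5 : ℕ) : ZMod 5) := by
  rw [ZMod.natCast_mod, Nat.cast_list_sum, List.map_map]
  rfl

/-! ### The two bounds -/

theorem fact_prime_five : Fact (Nat.Prime 5) := ⟨by norm_num⟩

abbrev incM : Matrix ↥hermitianBlocks (Fin 65) (ZMod 5) :=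
  hermitianIncidenceMatrix.submatrix id ptEquiv

theorem incM_rank : incM.rank = hermitianIncidenceMatrix.rank :=
  Matrix.rank_submatrix _ (Equiv.refl _) ptEquiv

def kerM : Matrix (Fin 65) (Fin 13) (ZMod 5) := fun i k => (kerD i k : ZMod 5)

theorem incM_mul_kerM : incM * kerM = 0 := by
  ext B k
  obtain ⟨W, hW, hb, hc⟩ := B.2
  obtain ⟨n, hn, rfl⟩ := exists_line W hW
  have hB : B.1 = lineSet n := hb
  have hlen : (lineIdx n).length = 5 := by rw [← lineSet_ncard n hn, ← hB]; exact hc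
  have hmem : lineIdx n ∈ blockList := by
    rw [← lines_ok]
    exact List.mem_filter.mpr ⟨List.mem_map_of_mem hn, by simpa using hlen⟩
  have h0 := List.all_eq_true.mp (List.all_eq_true.mp ker_ok _ hmem) k (List.mem_range.mpr k.2)
  rw [beq_iff_eq] at h0
  rw [Matrix.mul_apply]
  have := row_sum B n hn hB (fun i => (kerD i k : ZMod 5))
  rw [cast_sum _ (fun i => kerD i k), h0] at this
  simpa [kerM] using this

theorem freeList_length : freeList.length = 13 := by decide +kernel

theorem kerM_rank : 13 ≤ kerM.rank := by
  have := fact_prime_five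
  have hlt : ∀ r : Fin 13, freeList.getD r 0 < 65 := by
    intro r
    rw [List.getD_eq_getElem _ _ (by rw [freeList_length]; exact r.2)]
    have := List.all_eq_true.mp free_lt _
      (List.getElem_mem (by rw [freeList_length]; exact r.2 : (r : ℕ) < freeList.length))
    simpa using this
  have h1 : kerM.submatrix (fun r : Fin 13 => ⟨freeList.getD r 0, hlt r⟩) id = 1 := by
    ext r j
    have h0 := List.all_eq_true.mp (List.all_eq_true.mp free_ok r (List.mem_range.mpr r.2)) j
      (List.mem_range.mpr j.2)
    rw [beq_iff_eq] at h0
    simp only [Matrix.submatrix_apply, kerM, id, h0, Matrix.one_apply, Fin.ext_iff]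
    by_cases hrj : (r : ℕ) = j
    · simp [hrj]
    · rw [beq_false_of_ne hrj]; simp [hrj]
  have h2 := Matrix.rank_submatrix_le kerM (fun r : Fin 13 => ⟨freeList.getD r 0, hlt r⟩) id
  rw [h1, Matrix.rank_one, Fintype.card_fin] at h2
  exact h2

theorem rowLines_length : rowLines.length = 52 := by decide +kernel

def rowLine (r : Fin 52) : ℕ × ℕ × ℕ := rowLines[r.1]'(by rw [rowLines_length]; exact r.2)

theorem rowLine_normal (r : Fin 52) : rowLine r ∈ normals := by
  have := List.all_eq_true.mp rows_mem (rowLine r) (List.getElem_mem _)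
  simpa using this

theorem rowLine_idx (r : Fin 52) : lineIdx (rowLine r) = rowBlocks.getD r [] := by
  have h : r.1 < (rowLines.map lineIdx).length := by
    rw [List.length_map, rowLines_length]; exact r.2
  rw [← rows_ok, List.getD_eq_getElem _ _ h, List.getElem_map]
  rfl

theorem rowLine_len (r : Fin 52) : (lineIdx (rowLine r)).length = 5 := by
  have hm : lineIdx (rowLine r) ∈ rowBlocks := by
    rw [← rows_ok]; exact List.mem_map_of_mem (List.getElem_mem _)
  have := List.all_eq_true.mp rowBlocks_len _ hm
  simpa using this

def rowB (r : Fin 52) : ↥hermitianBlocks :=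
  ⟨lineSet (rowLine r), LinearMap.ker (func (vec (rowLine r))),
    finrank_func _ (normal_of_mem (rowLine_normal r)).ne_zero, rfl, by
      rw [lineSet_ncard _ (rowLine_normal r), rowLine_len]⟩

def invM : Matrix (Fin 65) (Fin 52) (ZMod 5) := fun i j => (invD i j : ZMod 5)

theorem incM_mul_invM : incM.submatrix rowB id * invM = 1 := by
  ext r j
  have h0 := List.all_eq_true.mp (List.all_eq_true.mp inv_ok r (List.mem_range.mpr r.2)) j
    (List.mem_range.mpr j.2)
  rw [beq_iff_eq, ← rowLine_idx] at h0
  have := row_sum (rowB r) (rowLine r) (rowLine_normal r) rfl (fun i => (invD i j : ZMod 5))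
  rw [cast_sum _ (fun i => invD i j), h0] at this
  rw [Matrix.mul_apply]
  simp only [Matrix.submatrix_apply, id, invM]
  rw [this, Matrix.one_apply]
  simp only [Fin.ext_iff]
  by_cases hrj : (r : ℕ) = j
  · simp [hrj]
  · rw [beq_false_of_ne hrj]; simp [hrj]

/-- The 5-rank of the Hermitian unital design of order 4 is exactly 52: its block–point
incidence matrix has rank 52 over the field `GF(5)`. -/
theorem hermitian_unital_design_five_rank :
    hermitianIncidenceMatrix.rank = 52 := by
  have := fact_prime_five
  rw [← incM_rank]
  apply le_antisymm
  · have := Matrix.rank_add_rank_le_card_of_mul_eq_zero incM_mul_kerM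
    rw [Fintype.card_fin] at this
    have := kerM_rank
    omega
  · have h1 := Matrix.rank_mul_le_left (incM.submatrix rowB id) invM
    rw [incM_mul_invM, Matrix.rank_one, Fintype.card_fin] at h1
    exact h1.trans (Matrix.rank_submatrix_le incM rowB id)
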